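/- The Haar measure μ_0 of the compact group X is mixing for the Z^2-action: for all Borel sets A, B of X, μ_0(A ∩ T^k S^l B) tends to μ_0(A)·μ_0(B) as (k,l) → ∞ in Z^2. -/

import Mathlib

open MeasureTheory Filter

/-- Configurations: `ℤ²`-indexed families of elements of `ℤ/2ℤ`. -/
abbrev Config := ℤ → ℤ → ZMod 2

/-- The three-dot relation. -/
def threeDot (x : Config) : Prop :=
  ∀ k l : ℤ, x k l + x (k + 1) l + x k (l + 1) = 0

/-- The three-dot system `X`. -/
def Xset : Set Config := {x | threeDot x}

/-- The `ℤ²`-shift action: `shift k l x = T^k S^l x`. -/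
def shift (k l : ℤ) (x : Config) : Config := fun a b => x (a + k) (b + l)

/-- The shift `T`. -/
def Tm : Config → Config := shift 1 0

/-- The shift `S`. -/
def Sm : Config → Config := shift 0 1

/-- `Y` : points of `X` with coordinate `1` at the origin. -/
def Yset : Set Config := {x | threeDot x ∧ x 0 0 = 1}

/-- The map `σ : Y → Y`, extended to all configurations:
it equals `Tx` if `Tx` has a `1` at the origin, and `Sx` otherwise. -/
def sig (x : Config) : Config := if x 1 0 = 1 then Tm x else Sm x

/-- `Z` : points of `Y` with σ-antecedents of every depth (equivalently,
infinitely many σ-antecedents). -/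
def Zset : Set Config := {x | x ∈ Yset ∧ ∀ n : ℕ, ∃ y ∈ Yset, sig^[n] y = x}

/-- `Z₂` : points of `Z` having two distinct σ-preimages in `Z`. -/
def Z2set : Set Config :=
  {x | x ∈ Zset ∧ ∃ y z, y ≠ z ∧ y ∈ Zset ∧ z ∈ Zset ∧ sig y = x ∧ sig z = x}

/-- The σ-component of a point `x` of `Y`: points of the `ℤ²`-orbit of `x`
lying in `Y` whose forward σ-trajectory meets that of `x`. -/
def sigComp (x : Config) : Set Config :=
  {y | (∃ k l : ℤ, y = shift k l x) ∧ y ∈ Yset ∧ ∃ p q : ℕ, sig^[p] x = sig^[q] y}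

/-- Aperiodicity of a configuration for the `ℤ²`-action. -/
def Aperiodic (x : Config) : Prop := ∀ k l : ℤ, shift k l x = x → k = 0 ∧ l = 0

open MeasurableSpace Topology
open scoped ENNReal Pointwise

/-!
A point of `X` is a linear functional on the span of the monomials `t ^ k * (1 + t) ^ l` in
`𝔽₂(t)`, because `1 + t + (1 + t) = 0`. Restricting it to a finite window of `ℤ²` amounts to
restricting the functional to a finite subspace, and shifting the window by `p` multiplies the
subspace by the monomial `m` of exponent `p`. If `V` and `W` are finite subspaces, then `m • W`
meets `V` nontrivially only if `m` is a quotient of elements of `V` and `W`, hence only for finitely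
many `p`, distinct exponents giving distinct monomials. For all other `p`, points of `X` can be
prescribed independently on the two windows, so that cylinder events are exactly independent. A
π-system argument extends the convergence from cylinders to all Borel sets.
-/

section Convergence

theorem ennreal_tendsto_tsum_of_dominated {ι β : Type*} {l : Filter ι} {f : ι → β → ℝ≥0∞}
    {g bound : β → ℝ≥0∞} (hbound : ∑' b, bound b ≠ ∞) (hf : ∀ i b, f i b ≤ bound b)
    (hfg : ∀ b, Tendsto (f · b) l (𝓝 (g b))) :
    Tendsto (fun i => ∑' b, f i b) l (𝓝 (∑' b, g b)) := by
  rcases l.eq_or_neBot with rfl | hl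
  · exact tendsto_bot
  have hbound_ne (b : β) : bound b ≠ ∞ := ENNReal.ne_top_of_tsum_ne_top hbound b
  have hg (b : β) : g b ≤ bound b := le_of_tendsto' (hfg b) (hf · b)
  have hf_ne (i : ι) (b : β) : f i b ≠ ∞ := ne_top_of_le_ne_top (hbound_ne b) (hf i b)
  have hg_ne (b : β) : g b ≠ ∞ := ne_top_of_le_ne_top (hbound_ne b) (hg b)
  rw [← ENNReal.tendsto_toReal_iff
    (fun i => ne_top_of_le_ne_top hbound (ENNReal.tsum_le_tsum (hf i)))
    (ne_top_of_le_ne_top hbound (ENNReal.tsum_le_tsum hg))]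
  simp only [ENNReal.tsum_toReal_eq (hf_ne _), ENNReal.tsum_toReal_eq hg_ne]
  refine tendsto_tsum_of_dominated_convergence (ENNReal.summable_toReal hbound)
    (fun b => (ENNReal.tendsto_toReal (hg_ne b)).comp (hfg b)) (.of_forall fun i b => ?_)
  rw [Real.norm_of_nonneg ENNReal.toReal_nonneg]
  exact ENNReal.toReal_mono (hbound_ne b) (hf i b)

variable {Ω ι : Type*} [m : MeasurableSpace Ω] {l : Filter ι} {μ : Measure Ω} {C : Set (Set Ω)}

theorem tendsto_measure_of_isPiSystem_of_le [IsFiniteMeasure μ] {ν : Measure Ω}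
    [IsFiniteMeasure ν] {ρ : ι → Measure Ω} (hρ : ∀ i, ρ i ≤ μ) (hgen : m = generateFrom C)
    (hpi : IsPiSystem C) (huniv : Tendsto (fun i => ρ i Set.univ) l (𝓝 (ν Set.univ)))
    (hC : ∀ s ∈ C, Tendsto (fun i => ρ i s) l (𝓝 (ν s))) {s : Set Ω} (hs : MeasurableSet s) :
    Tendsto (fun i => ρ i s) l (𝓝 (ν s)) := by
  have hfin (i : ι) : IsFiniteMeasure (ρ i) := isFiniteMeasure_of_le μ (hρ i)
  induction s, hs using induction_on_inter hgen hpi with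
  | empty => simp only [measure_empty, tendsto_const_nhds]
  | basic t ht => exact hC t ht
  | compl t ht ih =>
    simp only [measure_compl ht (measure_ne_top _ _)]
    exact ENNReal.Tendsto.sub huniv ih (.inl (measure_ne_top _ _))
  | iUnion f hd hf ih =>
    have hμ : ∑' n, μ (f n) ≠ ∞ := measure_iUnion hd hf ▸ measure_ne_top μ _
    simp only [measure_iUnion hd hf]
    exact ennreal_tendsto_tsum_of_dominated hμ (fun i n => hρ i (f n)) ih

theorem tendsto_measure_inter_preimage_of_isPiSystem [IsProbabilityMeasure μ] {f : ι → Ω → Ω}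
    (hf : ∀ i, MeasurePreserving (f i) μ μ) (hgen : m = generateFrom C) (hpi : IsPiSystem C)
    (hC : ∀ A ∈ C, ∀ B ∈ C, Tendsto (fun i => μ (A ∩ f i ⁻¹' B)) l (𝓝 (μ A * μ B)))
    {A B : Set Ω} (hA : MeasurableSet A) (hB : MeasurableSet B) :
    Tendsto (fun i => μ (A ∩ f i ⁻¹' B)) l (𝓝 (μ A * μ B)) := by
  have hmeas {s : Set Ω} (hs : s ∈ C) : MeasurableSet s := hgen ▸ measurableSet_generateFrom hs
  have hpre {s : Set Ω} (hs : MeasurableSet s) (i : ι) : MeasurableSet (f i ⁻¹' s) :=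
    (hf i).measurable hs
  have hleft {s : Set Ω} (hs : s ∈ C) :
      Tendsto (fun i => μ (s ∩ f i ⁻¹' B)) l (𝓝 (μ s * μ B)) := by
    have hmap (i : ι) {t : Set Ω} (ht : MeasurableSet t) :
        (μ.restrict s).map (f i) t = μ (s ∩ f i ⁻¹' t) := by
      rw [Measure.map_apply (hf i).measurable ht, Measure.restrict_apply (hpre ht i),
        Set.inter_comm]
    have hle (i : ι) : (μ.restrict s).map (f i) ≤ μ :=
      (Measure.map_mono Measure.restrict_le_self (hf i).measurable).trans_eq (hf i).map_eq
    have : IsFiniteMeasure (μ s • μ) := μ.smul_finite (measure_ne_top _ _)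
    have key := tendsto_measure_of_isPiSystem_of_le (l := l) (ν := μ s • μ) hle hgen hpi
      (by simp [hmap _ MeasurableSet.univ, tendsto_const_nhds])
      (fun t ht => by simpa only [hmap _ (hmeas ht)] using! hC s hs t ht) hB
    simpa only [hmap _ hB] using! key
  have : IsFiniteMeasure (μ B • μ) := μ.smul_finite (measure_ne_top _ _)
  have key := tendsto_measure_of_isPiSystem_of_le (l := l) (ν := μ B • μ)
    (fun i => Measure.restrict_le_self (μ := μ) (s := f i ⁻¹' B)) hgen hpi
    (by simp [(hf _).measure_preimage hB.nullMeasurableSet, tendsto_const_nhds])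
    (fun s hs => by
      simpa only [Measure.restrict_apply (hmeas hs), Measure.smul_apply, smul_eq_mul,
        mul_comm (μ B)] using hleft hs) hA
  simpa only [Measure.restrict_apply hA, Measure.smul_apply, smul_eq_mul, mul_comm (μ B)] using key

end Convergence

section Haar

theorem conv_apply_of_ae_translate {G : Type*} [AddMonoid G] [MeasurableSpace G]
    [MeasurableAdd₂ G] {ρ ν : Measure G} [SFinite ν] {s : Set G} (hs : MeasurableSet s) {c : ℝ≥0∞}
    (h : ∀ᵐ y ∂ρ, ν ((y + ·) ⁻¹' s) = c) : (ρ ∗ ν) s = c * ρ Set.univ := by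
  rw [Measure.conv, Measure.map_apply measurable_add hs, Measure.prod_apply (measurable_add hs),
    ← lintegral_const]
  exact lintegral_congr_ae h

/-- `μ` is a Haar probability measure of the subgroup `H` of `G`, regarded as a measure on `G`: it
is carried by `H` and invariant under translation by elements of `H`. Here `H` is a bare set, so
that it can be `Xset`. -/
structure IsHaarProbabilityOn {G : Type*} [Add G] [MeasurableSpace G] (H : Set G)
    (μ : Measure G) : Prop extends IsProbabilityMeasure μ where
  ae_mem : ∀ᵐ x ∂μ, x ∈ H
  measurePreserving_add_left : ∀ y ∈ H, MeasurePreserving (y + ·) μ μ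

namespace IsHaarProbabilityOn

variable {G : Type*} [MeasurableSpace G] {H : Set G} {μ ν : Measure G}

theorem measure_preimage_add_left [Add G] (hμ : IsHaarProbabilityOn H μ) {y : G} (hy : y ∈ H)
    {s : Set G} (hs : MeasurableSet s) : μ ((y + ·) ⁻¹' s) = μ s :=
  (hμ.measurePreserving_add_left y hy).measure_preimage hs.nullMeasurableSet

theorem map [AddZeroClass G] [MeasurableAdd G] {G' : Type*} [AddZeroClass G'] [MeasurableSpace G']
    [MeasurableAdd G'] {H' : Set G'} (hμ : IsHaarProbabilityOn H μ) {f : G →+ G'}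
    (hf : Measurable f) (hH' : MeasurableSet H') (hmaps : Set.MapsTo f H H')
    (hsurj : Set.SurjOn f H H') : IsHaarProbabilityOn H' (μ.map f) := by
  have := hμ.toIsProbabilityMeasure
  refine ⟨Measure.isProbabilityMeasure_map hf.aemeasurable, ?_, fun y hy => ?_⟩
  · exact (ae_map_iff hf.aemeasurable hH').2 (hμ.ae_mem.mono fun _ hx => hmaps hx)
  · obtain ⟨x, hx, rfl⟩ := hsurj hy
    refine ⟨measurable_const_add _, ?_⟩
    rw [Measure.map_map (measurable_const_add _) hf]
    conv_rhs => rw [← (hμ.measurePreserving_add_left x hx).map_eq,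
      Measure.map_map hf (measurable_const_add _)]
    congr 1
    funext z
    exact (map_add f x z).symm

variable [AddCommMonoid G] [MeasurableAdd₂ G]

theorem unique (hμ : IsHaarProbabilityOn H μ) (hν : IsHaarProbabilityOn H ν) : μ = ν := by
  have := hμ.toIsProbabilityMeasure
  have := hν.toIsProbabilityMeasure
  ext s hs
  calc μ s = (ν ∗ μ) s := by
        rw [conv_apply_of_ae_translate hs
          (hν.ae_mem.mono fun y hy => hμ.measure_preimage_add_left hy hs), measure_univ, mul_one]
    _ = (μ ∗ ν) s := by rw [Measure.conv_comm]
    _ = ν s := by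
        rw [conv_apply_of_ae_translate hs
          (hμ.ae_mem.mono fun y hy => hν.measure_preimage_add_left hy hs), measure_univ, mul_one]

theorem measure_inter_eq_mul (hμ : IsHaarProbabilityOn H μ) {A B : Set G}
    (hA : MeasurableSet A) (hB : MeasurableSet B)
    (hAB : ∀ y ∈ H, ∃ z ∈ H, (z + ·) ⁻¹' A = A ∧ (z + ·) ⁻¹' B = (y + ·) ⁻¹' B) :
    μ (A ∩ B) = μ A * μ B := by
  have := hμ.toIsProbabilityMeasure
  have htranslate : ∀ y ∈ H, μ.restrict A ((y + ·) ⁻¹' B) = μ (A ∩ B) := by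
    intro y hy
    obtain ⟨z, hz, hzA, hzB⟩ := hAB y hy
    rw [Measure.restrict_apply (measurable_const_add y hB), Set.inter_comm, ← hzB]
    nth_rewrite 1 [← hzA]
    rw [← Set.preimage_inter, hμ.measure_preimage_add_left hz (hA.inter hB)]
  calc μ (A ∩ B) = (μ ∗ μ.restrict A) B := by
        rw [conv_apply_of_ae_translate hB (hμ.ae_mem.mono htranslate), measure_univ, mul_one]
    _ = (μ.restrict A ∗ μ) B := by rw [Measure.conv_comm]
    _ = μ A * μ B := by
        rw [conv_apply_of_ae_translate hB ((ae_restrict_of_ae hμ.ae_mem).mono fun y hy =>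
          hμ.measure_preimage_add_left hy hB), Measure.restrict_apply_univ, mul_comm]

end IsHaarProbabilityOn

end Haar

section LinearAlgebra

theorem exists_linearMap_eqOn_of_disjoint {k V V' : Type*} [DivisionRing k] [AddCommGroup V]
    [Module k V] [AddCommGroup V'] [Module k V'] {p q : Submodule k V} (hpq : Disjoint p q)
    (f g : V →ₗ[k] V') : ∃ h : V →ₗ[k] V', Set.EqOn h f p ∧ Set.EqOn h g q := by
  obtain ⟨p', hpp', hcompl⟩ := hpq.exists_isCompl
  refine ⟨LinearMap.ofIsCompl hcompl (f ∘ₗ p'.subtype) (g ∘ₗ q.subtype), fun x hx => ?_,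
    fun x hx => ?_⟩
  · exact LinearMap.ofIsCompl_apply_left hcompl ⟨x, hpp' hx⟩
  · exact LinearMap.ofIsCompl_apply_right hcompl ⟨x, hx⟩

theorem finite_setOf_not_disjoint_smul {k K : Type*} [CommSemiring k] [Field K] [Algebra k K]
    {V W : Submodule k K} (hV : (V : Set K).Finite) (hW : (W : Set K).Finite) :
    {a : K | ¬Disjoint V (a • W)}.Finite := by
  refine (hV.div hW).subset fun a ha => ?_
  obtain ⟨v, hv, hvW, hv0⟩ : ∃ v ∈ V, v ∈ a • W ∧ v ≠ 0 := by
    simpa [Submodule.disjoint_def] using ha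
  obtain ⟨w, hw, rfl⟩ := Submodule.mem_smul_pointwise_iff_exists _ _ _ |>.1 hvW
  have hw0 : w ≠ 0 := right_ne_zero_of_mul hv0
  exact ⟨a * w, hv, w, hw, mul_div_cancel_right₀ a hw0⟩

end LinearAlgebra

section Monomials

theorem valuation_idealX_one_add_X (F : Type*) [Field F] :
    (Polynomial.idealX F).valuation (RatFunc F) (1 + RatFunc.X) = 1 := by
  apply Valuation.map_one_add_of_lt
  rw [Polynomial.valuation_X_eq_neg_one, ← WithZero.exp_zero, WithZero.exp_lt_exp]
  exact neg_one_lt_zero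

theorem inftyValuation_one_add_X (F : Type*) [Field F] [DecidableEq (RatFunc F)] :
    RatFunc.inftyValuation F (1 + RatFunc.X) = WithZero.exp 1 := by
  rw [Valuation.map_add_eq_of_lt_right, RatFunc.inftyValuation.X]
  rw [map_one, RatFunc.inftyValuation.X, ← WithZero.exp_zero, WithZero.exp_lt_exp]
  exact zero_lt_one

theorem ratFunc_one_add_X_ne_zero (F : Type*) [Field F] : (1 + RatFunc.X : RatFunc F) ≠ 0 :=
  (Valuation.ne_zero_iff _).1 ((valuation_idealX_one_add_X F).symm ▸ one_ne_zero)

-- The place at infinity determines `k + l` and the place at zero determines `k`.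
theorem ratFunc_X_zpow_mul_one_add_X_zpow_injective (F : Type*) [Field F] :
    Function.Injective fun p : ℤ × ℤ =>
      (RatFunc.X : RatFunc F) ^ p.1 * (1 + RatFunc.X) ^ p.2 := by
  classical
  rintro ⟨k, l⟩ ⟨k', l'⟩ h
  have hinfty : k + l = k' + l' := by
    simpa [inftyValuation_one_add_X, ← WithZero.exp_zsmul, ← WithZero.exp_add] using
      congrArg (RatFunc.inftyValuation F) h
  have hzero : k = k' := by
    simpa [valuation_idealX_one_add_X, Polynomial.valuation_X_eq_neg_one,
      ← WithZero.exp_zsmul] using congrArg ((Polynomial.idealX F).valuation (RatFunc F)) h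
  ext
  · exact hzero
  · exact add_left_cancel (hzero ▸ hinfty)

/-- The monomial `t ^ k * (1 + t) ^ l` of `𝔽₂(t)` attached to the site `(k, l)`, on which a point
of the three-dot system, seen as a linear functional, takes its value at that site. -/
noncomputable def siteMonomial (p : ℤ × ℤ) : RatFunc (ZMod 2) :=
  RatFunc.X ^ p.1 * (1 + RatFunc.X) ^ p.2

theorem siteMonomial_injective : Function.Injective siteMonomial :=
  ratFunc_X_zpow_mul_one_add_X_zpow_injective (ZMod 2)

theorem siteMonomial_add (p q : ℤ × ℤ) :
    siteMonomial (p + q) = siteMonomial p * siteMonomial q := by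
  rw [siteMonomial, Prod.fst_add, Prod.snd_add, zpow_add₀ (RatFunc.X_ne_zero (K := ZMod 2)),
    zpow_add₀ (ratFunc_one_add_X_ne_zero (ZMod 2)), mul_mul_mul_comm]
  rfl

theorem siteMonomial_three_dot (k l : ℤ) :
    siteMonomial (k, l) + siteMonomial (k + 1, l) + siteMonomial (k, l + 1) = 0 := by
  simp only [siteMonomial, zpow_add_one₀ (RatFunc.X_ne_zero (K := ZMod 2)),
    zpow_add_one₀ (ratFunc_one_add_X_ne_zero (ZMod 2))]
  linear_combination (RatFunc.X ^ k * (1 + RatFunc.X) ^ l * (1 + RatFunc.X)) *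
    CharTwo.two_eq_zero (R := RatFunc (ZMod 2))

/-- The span of the monomials attached to the sites of `E`. Its dual is the space of restrictions
to `E` of points of the three-dot system. -/
noncomputable def siteSpan (E : Set (ℤ × ℤ)) : Submodule (ZMod 2) (RatFunc (ZMod 2)) :=
  Submodule.span (ZMod 2) (siteMonomial '' E)

theorem siteMonomial_mem_siteSpan {E : Set (ℤ × ℤ)} {p : ℤ × ℤ} (hp : p ∈ E) :
    siteMonomial p ∈ siteSpan E :=
  Submodule.subset_span (Set.mem_image_of_mem _ hp)

theorem siteSpan_vadd (p : ℤ × ℤ) (E : Set (ℤ × ℤ)) :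
    siteSpan (p +ᵥ E) = siteMonomial p • siteSpan E := by
  simp only [siteSpan, Submodule.smul_span, ← Set.image_vadd, ← Set.image_smul, Set.image_image,
    vadd_eq_add, smul_eq_mul, siteMonomial_add]

theorem finite_siteSpan {E : Set (ℤ × ℤ)} (hE : E.Finite) :
    (siteSpan E : Set (RatFunc (ZMod 2))).Finite := by
  have : Module.Finite (ZMod 2) (siteSpan E) :=
    FiniteDimensional.span_of_finite (ZMod 2) (hE.image siteMonomial)
  have : Finite (siteSpan E) := Module.finite_of_finite (ZMod 2)
  exact Set.toFinite _

theorem eventually_disjoint_siteSpan_vadd {E F : Set (ℤ × ℤ)} (hE : E.Finite) (hF : F.Finite) :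
    ∀ᶠ p : ℤ × ℤ in cofinite, Disjoint (siteSpan E) (siteSpan (p +ᵥ F)) := by
  simp only [siteSpan_vadd]
  exact siteMonomial_injective.tendsto_cofinite.eventually
    (finite_setOf_not_disjoint_smul (finite_siteSpan hE) (finite_siteSpan hF))

end Monomials

section ThreeDot

theorem threeDot_of_dual (φ : Module.Dual (ZMod 2) (RatFunc (ZMod 2))) :
    threeDot fun k l => φ (siteMonomial (k, l)) := by
  intro k l
  rw [← map_add, ← map_add, siteMonomial_three_dot, map_zero]

theorem threeDot_shift {x : Config} (hx : threeDot x) (k l : ℤ) : threeDot (shift k l x) := by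
  intro a b
  simpa only [shift, add_right_comm] using hx (a + k) (b + l)

theorem exists_dual_polynomial_eq {x : Config} (hx : threeDot x) :
    ∃ φ : Module.Dual (ZMod 2) (Polynomial (ZMod 2)),
      ∀ a b : ℕ, φ (Polynomial.X ^ a * (1 + Polynomial.X) ^ b) = x a b := by
  refine ⟨(Polynomial.basisMonomials (ZMod 2)).constr (ZMod 2) fun n => x n 0, fun a b => ?_⟩
  induction b generalizing a with
  | zero =>
    have h := (Polynomial.basisMonomials (ZMod 2)).constr_basis (ZMod 2) (fun n => x n 0) a
    simpa [Polynomial.X_pow_eq_monomial] using h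
  | succ b ih =>
    have h : (Polynomial.X ^ a * (1 + Polynomial.X) ^ (b + 1) : Polynomial (ZMod 2)) =
        Polynomial.X ^ a * (1 + Polynomial.X) ^ b +
          Polynomial.X ^ (a + 1) * (1 + Polynomial.X) ^ b := by ring
    rw [h, map_add, ih, ih]
    exact_mod_cast CharTwo.add_eq_zero.1 (hx a b)

theorem exists_dual_ratFunc_eq_natCast {x : Config} (hx : threeDot x) :
    ∃ φ : Module.Dual (ZMod 2) (RatFunc (ZMod 2)), ∀ a b : ℕ, φ (siteMonomial (a, b)) = x a b := by
  obtain ⟨φ, hφ⟩ := exists_dual_polynomial_eq hx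
  let ι := (IsScalarTower.toAlgHom (ZMod 2) (Polynomial (ZMod 2)) (RatFunc (ZMod 2))).toLinearMap
  obtain ⟨r, hr⟩ : ∃ r, r ∘ₗ ι = LinearMap.id :=
    ι.exists_leftInverse_of_injective (LinearMap.ker_eq_bot.2 (RatFunc.algebraMap_injective _))
  refine ⟨φ ∘ₗ r, fun a b => ?_⟩
  have hι : siteMonomial (a, b) = ι (Polynomial.X ^ a * (1 + Polynomial.X) ^ b) := by
    simp [siteMonomial, ι]
  rw [LinearMap.comp_apply, hι, ← LinearMap.comp_apply r, hr, LinearMap.id_apply, hφ]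

theorem exists_dual_eqOn_of_finite {x : Config} (hx : threeDot x) {E : Set (ℤ × ℤ)}
    (hE : E.Finite) :
    ∃ φ : Module.Dual (ZMod 2) (RatFunc (ZMod 2)), ∀ p ∈ E, φ (siteMonomial p) = x p.1 p.2 := by
  obtain ⟨⟨k, l⟩, hkl⟩ := hE.bddBelow
  obtain ⟨φ, hφ⟩ := exists_dual_ratFunc_eq_natCast (threeDot_shift hx k l)
  refine ⟨φ ∘ₗ LinearMap.mulLeft (ZMod 2) (siteMonomial (-(k, l))), fun p hp => ?_⟩
  obtain ⟨a, ha⟩ := Int.eq_ofNat_of_zero_le (sub_nonneg.2 (hkl hp).1)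
  obtain ⟨b, hb⟩ := Int.eq_ofNat_of_zero_le (sub_nonneg.2 (hkl hp).2)
  have hp_eq : -(k, l) + p = (↑a, ↑b) := by
    rw [neg_add_eq_sub]
    exact Prod.ext ha hb
  rw [LinearMap.comp_apply, LinearMap.mulLeft_apply, ← siteMonomial_add, hp_eq, hφ, shift, ← ha,
    ← hb, sub_add_cancel, sub_add_cancel]

theorem exists_threeDot_eqOn_of_disjoint {E F : Set (ℤ × ℤ)} (hE : E.Finite) (hF : F.Finite)
    (hEF : Disjoint (siteSpan E) (siteSpan F)) {x y : Config} (hx : threeDot x)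
    (hy : threeDot y) :
    ∃ z, threeDot z ∧ (∀ p ∈ E, z p.1 p.2 = x p.1 p.2) ∧ ∀ p ∈ F, z p.1 p.2 = y p.1 p.2 := by
  obtain ⟨φ, hφ⟩ := exists_dual_eqOn_of_finite hx hE
  obtain ⟨ψ, hψ⟩ := exists_dual_eqOn_of_finite hy hF
  obtain ⟨χ, hχE, hχF⟩ := exists_linearMap_eqOn_of_disjoint hEF φ ψ
  exact ⟨fun k l => χ (siteMonomial (k, l)), threeDot_of_dual χ,
    fun p hp => (hχE (siteMonomial_mem_siteSpan hp)).trans (hφ p hp),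
    fun p hp => (hχF (siteMonomial_mem_siteSpan hp)).trans (hψ p hp)⟩

theorem shift_shift_neg (k l : ℤ) (x : Config) : shift k l (shift (-k) (-l) x) = x := by
  ext a b
  simp only [shift, add_neg_cancel_right]

theorem measurableSet_Xset : MeasurableSet Xset := by
  simp only [Xset, threeDot, Set.ofPred_forall]
  refine .iInter fun k => .iInter fun l => ?_
  exact measurableSet_eq_fun (by fun_prop) measurable_const

theorem measurable_shift (k l : ℤ) : Measurable (shift k l) := by
  unfold shift
  fun_prop

theorem IsHaarProbabilityOn.measurePreserving_shift {μ : Measure Config}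
    (hμ : IsHaarProbabilityOn Xset μ) (k l : ℤ) : MeasurePreserving (shift k l) μ μ := by
  let f : Config →+ Config := AddMonoidHom.mk' (shift k l) fun _ _ => rfl
  have hsurj : Set.SurjOn f Xset Xset := fun x hx =>
    ⟨shift (-k) (-l) x, threeDot_shift hx _ _, shift_shift_neg k l x⟩
  exact ⟨measurable_shift k l, (hμ.map (f := f) (measurable_shift k l) measurableSet_Xset
    (fun x hx => threeDot_shift hx k l) hsurj).unique hμ⟩

/-- The events of the form `{x | (x p)_{p ∈ E} ∈ S}` with `E` a finite set of sites, transported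
from `ℤ × ℤ → ZMod 2` along currying. -/
def configCylinders : Set (Set Config) :=
  Set.preimage Function.uncurry '' measurableCylinders fun _ : ℤ × ℤ => ZMod 2

theorem isPiSystem_configCylinders : IsPiSystem configCylinders :=
  isPiSystem_measurableCylinders.comap _

theorem generateFrom_configCylinders :
    generateFrom configCylinders = (inferInstance : MeasurableSpace Config) := by
  rw [configCylinders, ← comap_generateFrom, generateFrom_measurableCylinders]
  exact (MeasurableEquiv.curry ℤ ℤ (ZMod 2)).symm.measurableEmbedding.comap_eq

theorem exists_finite_mem_iff_of_mem_configCylinders {A : Set Config} (hA : A ∈ configCylinders) :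
    ∃ E : Set (ℤ × ℤ), E.Finite ∧
      ∀ x y : Config, (∀ p ∈ E, x p.1 p.2 = y p.1 p.2) → (x ∈ A ↔ y ∈ A) := by
  obtain ⟨_, ht, rfl⟩ := hA
  obtain ⟨E, S, -, rfl⟩ := (mem_measurableCylinders _).1 ht
  refine ⟨E, E.finite_toSet, fun x y hxy => ?_⟩
  have hrestrict : E.restrict (Function.uncurry x) = E.restrict (Function.uncurry y) :=
    funext fun p => hxy p p.2
  simp only [Set.mem_preimage, mem_cylinder, hrestrict]

theorem IsHaarProbabilityOn.eventually_measure_inter_preimage_shift_eq {μ : Measure Config}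
    (hμ : IsHaarProbabilityOn Xset μ) {A B : Set Config} (hA : A ∈ configCylinders)
    (hB : B ∈ configCylinders) :
    ∀ᶠ p : ℤ × ℤ in cofinite, μ (A ∩ shift p.1 p.2 ⁻¹' B) = μ A * μ B := by
  have hmeas {s : Set Config} (hs : s ∈ configCylinders) : MeasurableSet s :=
    generateFrom_configCylinders.le _ (measurableSet_generateFrom hs)
  obtain ⟨E, hE, hAE⟩ := exists_finite_mem_iff_of_mem_configCylinders hA
  obtain ⟨F, hF, hBF⟩ := exists_finite_mem_iff_of_mem_configCylinders hB
  filter_upwards [eventually_disjoint_siteSpan_vadd hE hF] with p hp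
  have hshift := hμ.measurePreserving_shift p.1 p.2
  rw [← hshift.measure_preimage (hmeas hB).nullMeasurableSet]
  refine hμ.measure_inter_eq_mul (hmeas hA) (hshift.measurable (hmeas hB)) fun y hy => ?_
  have hzero : threeDot 0 := fun _ _ => by simp
  obtain ⟨z, hz, hzE, hzF⟩ := exists_threeDot_eqOn_of_disjoint hE hF.vadd_set hp hzero hy
  refine ⟨z, hz, ?_, ?_⟩
  · ext x
    exact hAE _ _ fun q hq => by simp [hzE q hq]
  · ext x
    refine hBF _ _ fun q hq => ?_
    have hzy := hzF _ (Set.vadd_mem_vadd_set (a := p) hq)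
    simp only [vadd_eq_add, Prod.fst_add, Prod.snd_add, add_comm p.1, add_comm p.2] at hzy
    simp only [shift, Pi.add_apply, hzy]

end ThreeDot

/-- The Haar measure of the compact group `X` (characterized as the
translation-invariant probability measure carried by `X`) is mixing for the
`ℤ²`-action. -/
theorem stmt11 (μ₀ : Measure Config) [IsProbabilityMeasure μ₀]
    (hX : μ₀ Xset = 1)
    (hHaar : ∀ y : Config, threeDot y →
      MeasurePreserving (fun z => y + z) μ₀ μ₀) :
    ∀ A B : Set Config, MeasurableSet A → MeasurableSet B →
      Tendsto (fun p : ℤ × ℤ => μ₀ (A ∩ shift p.1 p.2 ⁻¹' B)) cofinite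
        (nhds (μ₀ A * μ₀ B)) := by
  have hμ : IsHaarProbabilityOn Xset μ₀ :=
    ⟨inferInstance, (prob_compl_eq_zero_iff measurableSet_Xset).2 hX, hHaar⟩
  intro A B hA hB
  exact tendsto_measure_inter_preimage_of_isPiSystem
    (fun p : ℤ × ℤ => hμ.measurePreserving_shift p.1 p.2) generateFrom_configCylinders.symm
    isPiSystem_configCylinders
    (fun _ hC _ hD => tendsto_const_nhds.congr'
      ((hμ.eventually_measure_inter_preimage_shift_eq hC hD).mono fun _ h => h.symm)) hA hB
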